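/- Let F(x) = x·ln x and fix a > 0. The function G⁰_a(x) = ∫_a^x G¹_a(t) dt is convex on (0, ∞), where G¹_a(t) = (F(t) − F(a))/(t − a) for t ≠ a and G¹_a(a) = ln a + 1. -/

import Mathlib

open scoped BigOperators

/-- The periodic grid of indices: `(ZMod N)^3`. -/
abbrev GridIdx (N : ℕ) := ZMod N × ZMod N × ZMod N

namespace PNP

/-- Shift the first index by `a`. -/
def xsh {N : ℕ} (p : GridIdx N) (a : ZMod N) : GridIdx N := (p.1 + a, p.2.1, p.2.2)
/-- Shift the second index by `a`. -/
def ysh {N : ℕ} (p : GridIdx N) (a : ZMod N) : GridIdx N := (p.1, p.2.1 + a, p.2.2)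
/-- Shift the third index by `a`. -/
def zsh {N : ℕ} (p : GridIdx N) (a : ZMod N) : GridIdx N := (p.1, p.2.1, p.2.2 + a)

/-- Forward difference in `x`: `(D_x f)(p) = (f(p + e_x) - f(p)) / h` with `h = 1/N`. -/
noncomputable def Dx (N : ℕ) (f : GridIdx N → ℝ) : GridIdx N → ℝ :=
  fun p => (f (xsh p 1) - f p) * N
/-- Forward difference in `y`. -/
noncomputable def Dy (N : ℕ) (f : GridIdx N → ℝ) : GridIdx N → ℝ :=
  fun p => (f (ysh p 1) - f p) * N
/-- Forward difference in `z`. -/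
noncomputable def Dz (N : ℕ) (f : GridIdx N → ℝ) : GridIdx N → ℝ :=
  fun p => (f (zsh p 1) - f p) * N

/-- Backward difference in `x`: `(d_x f)(p) = (f(p) - f(p - e_x)) / h`. -/
noncomputable def dxm (N : ℕ) (f : GridIdx N → ℝ) : GridIdx N → ℝ :=
  fun p => (f p - f (xsh p (-1))) * N
/-- Backward difference in `y`. -/
noncomputable def dym (N : ℕ) (f : GridIdx N → ℝ) : GridIdx N → ℝ :=
  fun p => (f p - f (ysh p (-1))) * N
/-- Backward difference in `z`. -/
noncomputable def dzm (N : ℕ) (f : GridIdx N → ℝ) : GridIdx N → ℝ :=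
  fun p => (f p - f (zsh p (-1))) * N

/-- Forward average in `x`: `(A_x f)(p) = (f(p + e_x) + f(p)) / 2`. -/
noncomputable def Ax (N : ℕ) (f : GridIdx N → ℝ) : GridIdx N → ℝ :=
  fun p => (f (xsh p 1) + f p) / 2
/-- Forward average in `y`. -/
noncomputable def Ay (N : ℕ) (f : GridIdx N → ℝ) : GridIdx N → ℝ :=
  fun p => (f (ysh p 1) + f p) / 2
/-- Forward average in `z`. -/
noncomputable def Az (N : ℕ) (f : GridIdx N → ℝ) : GridIdx N → ℝ :=
  fun p => (f (zsh p 1) + f p) / 2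

/-- The discrete Laplacian `Δ_h f = d_x(D_x f) + d_y(D_y f) + d_z(D_z f)`. -/
noncomputable def lap (N : ℕ) (f : GridIdx N → ℝ) : GridIdx N → ℝ :=
  fun p => dxm N (Dx N f) p + dym N (Dy N f) p + dzm N (Dz N f) p

/-- The discrete inner product `⟨f, g⟩ = h³ ∑ f·g` with `h = 1/N`. -/
noncomputable def ip (N : ℕ) [NeZero N] (f g : GridIdx N → ℝ) : ℝ :=
  ((1 : ℝ) / N) ^ 3 * ∑ p : GridIdx N, f p * g p

/-- The discrete `L²` norm `‖f‖₂ = ⟨f, f⟩^{1/2}`. -/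
noncomputable def l2 (N : ℕ) [NeZero N] (f : GridIdx N → ℝ) : ℝ :=
  Real.sqrt (ip N f f)

/-- The discrete maximum norm `‖f‖_∞ = max |f|`. -/
noncomputable def linf (N : ℕ) [NeZero N] (f : GridIdx N → ℝ) : ℝ :=
  ⨆ p : GridIdx N, |f p|

/-- A grid function has zero mean if its values sum to zero. -/
def zeroMean (N : ℕ) [NeZero N] (f : GridIdx N → ℝ) : Prop :=
  ∑ p : GridIdx N, f p = 0

/-- With `F(x) = x·ln x`, the difference quotient `G¹_a(x) = (F(x) - F(a))/(x - a)`
for `x ≠ a`, with value `F'(a) = ln a + 1` at `x = a`. -/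
noncomputable def G1 (a x : ℝ) : ℝ :=
  if x = a then Real.log a + 1
  else (x * Real.log x - a * Real.log a) / (x - a)

end PNP

open PNP

/-! The secant slopes of a convex function `f` through a fixed point `a`, completed by `f' a` at `a`
itself, form an increasing function. A primitive of an increasing function `g` is convex: for
`x < y < z`, the mean of `g` over `[x, y]` is at most `g y`, which is at most its mean over
`[y, z]`, and these means are the slopes of the primitive. -/

section MonotonePrimitive

open Set

variable {g : ℝ → ℝ}

theorem sub_mul_left_le_integral_of_monotoneOn {x y : ℝ} (hxy : x ≤ y)
    (hg : MonotoneOn g (Icc x y)) : (y - x) * g x ≤ ∫ t in x..y, g t := by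
  have hgi : IntervalIntegrable g MeasureTheory.volume x y :=
    MonotoneOn.intervalIntegrable (by rwa [uIcc_of_le hxy])
  calc (y - x) * g x = ∫ _ in x..y, g x := by
        rw [intervalIntegral.integral_const, smul_eq_mul]
    _ ≤ ∫ t in x..y, g t :=
        intervalIntegral.integral_mono_on hxy intervalIntegrable_const hgi
          fun _ ht => hg (left_mem_Icc.2 hxy) ht ht.1

theorem integral_le_sub_mul_right_of_monotoneOn {x y : ℝ} (hxy : x ≤ y)
    (hg : MonotoneOn g (Icc x y)) : ∫ t in x..y, g t ≤ (y - x) * g y := by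
  have hgi : IntervalIntegrable g MeasureTheory.volume x y :=
    MonotoneOn.intervalIntegrable (by rwa [uIcc_of_le hxy])
  calc ∫ t in x..y, g t ≤ ∫ _ in x..y, g y :=
        intervalIntegral.integral_mono_on hxy hgi intervalIntegrable_const
          fun _ ht => hg ht (right_mem_Icc.2 hxy) ht.2
    _ = (y - x) * g y := by rw [intervalIntegral.integral_const, smul_eq_mul]

theorem convexOn_integral_of_monotoneOn {s : Set ℝ} {a : ℝ} (hs : Convex ℝ s)
    (hg : MonotoneOn g s) (ha : a ∈ s) : ConvexOn ℝ s fun x => ∫ t in a..x, g t := by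
  have hord : s.OrdConnected := hs.ordConnected
  have hgi {x : ℝ} (hx : x ∈ s) : IntervalIntegrable g MeasureTheory.volume a x :=
    (hg.mono (hord.uIcc_subset ha hx)).intervalIntegrable
  refine convexOn_of_slope_mono_adjacent hs fun {x y z} hx hz hxy hyz => ?_
  have hy : y ∈ s := hord.out hx hz ⟨hxy.le, hyz.le⟩
  calc ((∫ t in a..y, g t) - ∫ t in a..x, g t) / (y - x)
      = (∫ t in x..y, g t) / (y - x) := by
        rw [intervalIntegral.integral_interval_sub_left (hgi hy) (hgi hx)]
    _ ≤ g y := (div_le_iff₀' (sub_pos.2 hxy)).2 <|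
        integral_le_sub_mul_right_of_monotoneOn hxy.le (hg.mono (hord.out hx hy))
    _ ≤ (∫ t in y..z, g t) / (z - y) := (le_div_iff₀' (sub_pos.2 hyz)).2 <|
        sub_mul_left_le_integral_of_monotoneOn hyz.le (hg.mono (hord.out hy hz))
    _ = ((∫ t in a..z, g t) - ∫ t in a..y, g t) / (z - y) := by
        rw [intervalIntegral.integral_interval_sub_left (hgi hz) (hgi hy)]

end MonotonePrimitive

section ConvexSlope

variable {f : ℝ → ℝ} {s : Set ℝ} {a : ℝ}

theorem monotoneOn_dslope_of_convexOn (hf : ConvexOn ℝ s f) (ha : a ∈ s)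
    (hfa : DifferentiableAt ℝ f a) : MonotoneOn (dslope f a) s := by
  intro x hx y hy hxy
  rcases eq_or_ne a x with rfl | hax <;> rcases eq_or_ne a y with rfl | hay
  · exact le_rfl
  · rw [dslope_same, dslope_of_ne f hay.symm]
    exact hf.deriv_le_slope hx hy (hxy.lt_of_ne hay) hfa
  · rw [dslope_same, dslope_of_ne f hax.symm, slope_comm]
    exact hf.slope_le_deriv hx hy (hxy.lt_of_ne hax.symm) hfa
  · rw [dslope_of_ne f hax.symm, dslope_of_ne f hay.symm]
    exact hf.slope_mono ha ⟨hx, hax.symm⟩ ⟨hy, hay.symm⟩ hxy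

theorem convexOn_integral_dslope (hf : ConvexOn ℝ s f) (ha : a ∈ s)
    (hfa : DifferentiableAt ℝ f a) : ConvexOn ℝ s fun x => ∫ t in a..x, dslope f a t :=
  convexOn_integral_of_monotoneOn hf.1 (monotoneOn_dslope_of_convexOn hf ha hfa) ha

end ConvexSlope

theorem G1_eq_dslope_mul_log {a : ℝ} (ha : a ≠ 0) :
    G1 a = dslope (fun x => x * Real.log x) a := by
  funext x
  rcases eq_or_ne x a with rfl | hxa
  · rw [G1, if_pos rfl, dslope_same, Real.deriv_mul_log ha]
  · rw [G1, if_neg hxa, dslope_of_ne _ hxa, slope_def_field]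

/-- `G⁰_a(x) = ∫_a^x G¹_a(t) dt` is convex on `(0, ∞)`. -/
theorem stmt6 (a : ℝ) (ha : 0 < a) :
    ConvexOn ℝ (Set.Ioi (0 : ℝ)) (fun x => ∫ t in a..x, G1 a t) := by
  have hconv : ConvexOn ℝ (Set.Ioi (0 : ℝ)) fun x => x * Real.log x :=
    Real.convexOn_mul_log.subset Set.Ioi_subset_Ici_self (convex_Ioi 0)
  rw [G1_eq_dslope_mul_log ha.ne']
  exact convexOn_integral_dslope hconv ha (Real.hasDerivAt_mul_log ha.ne').differentiableAt
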